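/- Let I be an index set and, for each i ∈ I, let G_i be a group generated by a finite subset S_i, and assume each G_i is amenable, i.e. for every nonempty finite T ⊆ G_i and δ > 0 there exists a nonempty finite F ⊆ G_i with #(F \ F·g) ≤ δ·#F for all g ∈ T. Then the following are equivalent: (1) the family {(G_i, S_i)}_{i∈I} is uniformly amenable: for every ε > 0 there exist D ∈ ℕ and functions f_i : G_i → [0,∞) with Σ_{γ∈G_i} f_i(γ)² = 1, Σ_{γ∈G_i} (f_i(γ) − f_i(γs))² ≤ ε² for every s ∈ S_i, and supp(f_i) ⊆ B(1_{G_i}, D); (2) the family {(G_i, S_i)}_{i∈I} has uniform Property A with respect to the word metrics: for every ε > 0 and every R ∈ ℕ there exist D ∈ ℕ and maps ξ_i assigning to each x ∈ G_i a function ξ_{i,x} : G_i → [0,∞) with Σ_{γ∈G_i} ξ_{i,x}(γ)² = 1, such that Σ_{γ∈G_i} (ξ_{i,x}(γ) − ξ_{i,y}(γ))² ≤ ε² whenever x⁻¹y ∈ B(1_{G_i}, R), and supp(ξ_{i,x}) ⊆ x·B(1_{G_i}, D) for every x ∈ G_i and i ∈ I. -/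

import Mathlib

/-- The word-metric ball `B(1_G, D)` with respect to a generating set `S`:
the set of elements of `G` expressible as a product of at most `D` elements
of `S ∪ S⁻¹`. -/
def wordBall {G : Type*} [Group G] (S : Set G) (D : ℕ) : Set G :=
  {g | ∃ l : List G, l.length ≤ D ∧ (∀ x ∈ l, x ∈ S ∨ x⁻¹ ∈ S) ∧ l.prod = g}

theorem aux_summable {α : Type*} {g : α → ℝ} (h : ∑' a, g a = 1) : Summable g := by
  by_contra hc
  rw [tsum_eq_zero_of_not_summable hc] at h
  exact zero_ne_one h

theorem aux_summable_sub {α : Type*} {g k : α → ℝ} (hg : Summable fun a => g a ^ 2)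
    (hk : Summable fun a => k a ^ 2) : Summable fun a => (g a - k a) ^ 2 := by
  refine Summable.of_nonneg_of_le (fun a => sq_nonneg _) (fun a => ?_)
    ((hg.mul_left 2).add (hk.mul_left 2))
  nlinarith [sq_nonneg (g a + k a)]

theorem aux_summable_mul {G : Type*} [Group G] {f : G → ℝ} (hf : Summable fun a => f a ^ 2)
    (g : G) : Summable fun a => f (a * g) ^ 2 :=
  (Equiv.mulRight g).summable_iff.mpr hf

theorem aux_list {G : Type*} [Group G] (S : Set G) (f : G → ℝ) (ε : ℝ)
    (hf : Summable fun a => f a ^ 2)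
    (hS : ∀ s ∈ S, ∑' γ, (f γ - f (γ * s)) ^ 2 ≤ ε ^ 2) (l : List G)
    (hl : ∀ x ∈ l, x ∈ S ∨ x⁻¹ ∈ S) :
    ∑' γ, (f γ - f (γ * l.prod)) ^ 2 ≤ 4 ^ l.length * ε ^ 2 := by
  induction l with
  | nil => simp; positivity
  | cons a l ih =>
    have ih' := ih (fun x hx => hl x (List.mem_cons_of_mem _ hx))
    have ha : ∑' γ, (f γ - f (γ * a)) ^ 2 ≤ ε ^ 2 := by
      rcases hl a List.mem_cons_self with h | h
      · exact hS a h
      · have h1 := hS _ h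
        rw [← (Equiv.mulRight a).tsum_eq] at h1
        refine le_trans (le_of_eq ?_) h1
        refine tsum_congr fun γ => ?_
        simp
        ring
    have s1 := aux_summable_sub hf (aux_summable_mul hf a)
    have s2 := aux_summable_sub hf (aux_summable_mul hf l.prod)
    have s2' : Summable fun γ => (f (γ * a) - f (γ * a * l.prod)) ^ 2 :=
      s2.comp_injective (mul_left_injective a)
    have e2 : ∑' γ, (f (γ * a) - f (γ * a * l.prod)) ^ 2
        = ∑' γ, (f γ - f (γ * l.prod)) ^ 2 :=
      (Equiv.mulRight a).tsum_eq (fun γ => (f γ - f (γ * l.prod)) ^ 2)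
    have s3 := aux_summable_sub hf (aux_summable_mul hf (a :: l).prod)
    have key : ∑' γ, (f γ - f (γ * (a :: l).prod)) ^ 2 ≤
        ∑' γ, (2 * (f γ - f (γ * a)) ^ 2 + 2 * (f (γ * a) - f (γ * a * l.prod)) ^ 2) := by
      refine s3.tsum_le_tsum (fun γ => ?_) ((s1.mul_left 2).add (s2'.mul_left 2))
      rw [List.prod_cons, ← mul_assoc]
      nlinarith [sq_nonneg ((f γ - f (γ * a)) - (f (γ * a) - f (γ * a * l.prod)))]
    rw [(s1.mul_left 2).tsum_add (s2'.mul_left 2), tsum_mul_left, tsum_mul_left, e2] at key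
    have h4 : (1 : ℝ) ≤ 4 ^ l.length := one_le_pow₀ (by norm_num)
    rw [List.length_cons, pow_succ]
    nlinarith [mul_le_mul_of_nonneg_right h4 (sq_nonneg ε)]

theorem aux_inv {G : Type*} [Group G] {S : Set G} {D : ℕ} {g : G} (h : g ∈ wordBall S D) :
    g⁻¹ ∈ wordBall S D := by
  obtain ⟨l, h1, h2, h3⟩ := h
  refine ⟨(l.map (·⁻¹)).reverse, by simpa using h1, ?_, ?_⟩
  · intro x hx
    simp only [List.mem_reverse, List.mem_map] at hx
    obtain ⟨y, hy, rfl⟩ := hx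
    have := h2 y hy
    rw [inv_inv]
    exact this.symm
  · rw [← h3, List.prod_inv_reverse]

theorem aux_sqrt {X Y : ℝ} (hX : 0 ≤ X) (hY : 0 ≤ Y) :
    (√X - √Y) ^ 2 ≤ |X - Y| := by
  have h1 := Real.sqrt_nonneg X
  have h2 := Real.sqrt_nonneg Y
  have h3 := Real.sq_sqrt hX
  have h4 := Real.sq_sqrt hY
  rcases le_total (√X) (√Y) with h | h
  · refine le_trans ?_ (neg_le_abs _)
    nlinarith
  · refine le_trans ?_ (le_abs_self _)
    nlinarith

theorem aux_cs {α : Type*} (F : Finset α) (a b : α → ℝ) {c : ℝ} (hc : 0 ≤ c) :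
    (√((∑ x ∈ F, a x ^ 2) / c) - √((∑ x ∈ F, b x ^ 2) / c)) ^ 2
      ≤ (∑ x ∈ F, (a x - b x) ^ 2) / c := by
  have hA : 0 ≤ ∑ x ∈ F, a x ^ 2 := Finset.sum_nonneg fun _ _ => sq_nonneg _
  have hB : 0 ≤ ∑ x ∈ F, b x ^ 2 := Finset.sum_nonneg fun _ _ => sq_nonneg _
  rw [Real.sqrt_div hA, Real.sqrt_div hB, ← sub_div, div_pow, Real.sq_sqrt hc]
  refine div_le_div_of_nonneg_right ?_ hc
  have h := Real.sum_mul_le_sqrt_mul_sqrt F a b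
  have e : ∑ x ∈ F, (a x - b x) ^ 2
      = ∑ x ∈ F, a x ^ 2 + ∑ x ∈ F, b x ^ 2 - 2 * ∑ x ∈ F, a x * b x := by
    rw [Finset.mul_sum, ← Finset.sum_add_distrib, ← Finset.sum_sub_distrib]
    exact Finset.sum_congr rfl fun x _ => by ring
  rw [e]
  nlinarith [Real.sq_sqrt hA, Real.sq_sqrt hB]

theorem aux_u {G : Type*} [Group G] {ξ : G → G → ℝ} (h1 : ∀ x, ∑' γ, ξ x γ ^ 2 = 1) (x : G) :
    HasSum (fun h => ξ x (x * h⁻¹) ^ 2) 1 := by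
  have h : HasSum (fun γ => ξ x γ ^ 2) 1 := by
    rw [← h1 x]
    exact (aux_summable (h1 x)).hasSum
  exact ((Equiv.inv G).trans (Equiv.mulLeft x)).hasSum_iff.mpr h

theorem aux_back_one {G : Type*} [Group G] (F : Finset G) (hF : F.Nonempty)
    {ξ : G → G → ℝ} (h1 : ∀ x, ∑' γ, ξ x γ ^ 2 = 1) :
    ∑' h, (√((∑ x ∈ F, ξ x (x * h⁻¹) ^ 2) / F.card)) ^ 2 = 1 := by
  have hc : (F.card : ℝ) ≠ 0 := by exact_mod_cast hF.card_pos.ne'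
  have := (hasSum_sum (s := F) fun x _ => aux_u h1 x).div_const (F.card : ℝ)
  rw [Finset.sum_const, nsmul_eq_mul, mul_one, div_self hc] at this
  rw [← this.tsum_eq]
  refine tsum_congr fun h => Real.sq_sqrt ?_
  exact div_nonneg (Finset.sum_nonneg fun _ _ => sq_nonneg _) (Nat.cast_nonneg _)

set_option maxHeartbeats 1000000 in
theorem aux_back {G : Type*} [Group G] [DecidableEq G] (F : Finset G) (hF : F.Nonempty)
    {ξ : G → G → ℝ} (h1 : ∀ x, ∑' γ, ξ x γ ^ 2 = 1) (s : G) (ε : ℝ)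
    (hs : ∀ x, ∑' γ, (ξ x γ - ξ (x * s⁻¹) γ) ^ 2 ≤ (ε / 2) ^ 2)
    (hFs : ((F \ F.image (· * s⁻¹)).card : ℝ) ≤ ε ^ 2 / 8 * F.card) :
    ∑' h, (√((∑ x ∈ F, ξ x (x * h⁻¹) ^ 2) / F.card)
      - √((∑ x ∈ F, ξ x (x * (h * s)⁻¹) ^ 2) / F.card)) ^ 2 ≤ ε ^ 2 := by
  have hc : (0 : ℝ) < F.card := by exact_mod_cast hF.card_pos
  set E := F.image (· * s⁻¹) with hE
  have hEF : E.card = F.card := Finset.card_image_of_injective _ (mul_left_injective _)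
  have hcard : (E \ F).card = (F \ E).card := Finset.card_sdiff_comm hEF
  -- first part
  have d1 : ∀ x, HasSum (fun h => (ξ x (x * (h * s)⁻¹) - ξ (x * s⁻¹) (x * (h * s)⁻¹)) ^ 2)
      (∑' γ, (ξ x γ - ξ (x * s⁻¹) γ) ^ 2) := fun x =>
    (((Equiv.mulRight s).trans (Equiv.inv G)).trans (Equiv.mulLeft x)).hasSum_iff.mpr
      (aux_summable_sub (aux_summable (h1 x)) (aux_summable (h1 (x * s⁻¹)))).hasSum
  have D1 := ((hasSum_sum (s := F) fun x _ => d1 x).div_const (F.card : ℝ)).mul_left 2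
  have D2 := (((hasSum_sum (s := F \ E) fun x _ => aux_u h1 x).add
    (hasSum_sum (s := E \ F) fun x _ => aux_u h1 x)).div_const (F.card : ℝ)).mul_left 2
  have D := D1.add D2
  have pt : ∀ h, (√((∑ x ∈ F, ξ x (x * h⁻¹) ^ 2) / F.card)
      - √((∑ x ∈ F, ξ x (x * (h * s)⁻¹) ^ 2) / F.card)) ^ 2 ≤
      2 * ((∑ x ∈ F, (ξ x (x * (h * s)⁻¹) - ξ (x * s⁻¹) (x * (h * s)⁻¹)) ^ 2) / F.card) +
      2 * ((∑ x ∈ F \ E, ξ x (x * h⁻¹) ^ 2 + ∑ x ∈ E \ F, ξ x (x * h⁻¹) ^ 2) / F.card) := by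
    intro h
    have p1 := aux_cs F (fun x => ξ x (x * (h * s)⁻¹))
      (fun x => ξ (x * s⁻¹) (x * (h * s)⁻¹)) hc.le
    have hEs : ∑ x ∈ F, ξ (x * s⁻¹) (x * (h * s)⁻¹) ^ 2 = ∑ x ∈ E, ξ x (x * h⁻¹) ^ 2 := by
      rw [hE, Finset.sum_image fun a _ b _ hab => mul_left_injective _ hab]
      refine Finset.sum_congr rfl fun x _ => ?_
      simp [mul_assoc]
    rw [hEs] at p1
    have nn : ∀ K : Finset G, 0 ≤ ∑ x ∈ K, ξ x (x * h⁻¹) ^ 2 :=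
      fun K => Finset.sum_nonneg fun _ _ => sq_nonneg _
    have p2 := aux_sqrt (div_nonneg (nn F) hc.le) (div_nonneg (nn E) hc.le)
    have p3 : |(∑ x ∈ F, ξ x (x * h⁻¹) ^ 2) / F.card - (∑ x ∈ E, ξ x (x * h⁻¹) ^ 2) / F.card|
        ≤ (∑ x ∈ F \ E, ξ x (x * h⁻¹) ^ 2 + ∑ x ∈ E \ F, ξ x (x * h⁻¹) ^ 2) / F.card := by
      rw [← sub_div, abs_div, abs_of_pos hc]
      refine div_le_div_of_nonneg_right ?_ hc.le
      rw [← Finset.sum_sdiff_sub_sum_sdiff, abs_le]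
      constructor <;> linarith [nn (F \ E), nn (E \ F)]
    have tri : ∀ a b c : ℝ, (a - b) ^ 2 ≤ 2 * (b - c) ^ 2 + 2 * (a - c) ^ 2 := by
      intro a b c
      nlinarith [sq_nonneg (a + b - 2 * c)]
    have := tri (√((∑ x ∈ F, ξ x (x * h⁻¹) ^ 2) / F.card))
      (√((∑ x ∈ F, ξ x (x * (h * s)⁻¹) ^ 2) / F.card)) (√((∑ x ∈ E, ξ x (x * h⁻¹) ^ 2) / F.card))
    linarith
  have S1 := Summable.of_nonneg_of_le (fun h => sq_nonneg _) pt D.summable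
  refine (hasSum_le pt S1.hasSum D).trans ?_
  have b1 : (∑ x ∈ F, ∑' γ, (ξ x γ - ξ (x * s⁻¹) γ) ^ 2) / F.card ≤ (ε / 2) ^ 2 := by
    rw [div_le_iff₀ hc]
    refine (Finset.sum_le_sum fun x _ => hs x).trans (le_of_eq ?_)
    rw [Finset.sum_const, nsmul_eq_mul, mul_comm]
  have b2 : (∑ x ∈ F \ E, (1 : ℝ) + ∑ x ∈ E \ F, (1 : ℝ)) / F.card ≤ ε ^ 2 / 4 := by
    rw [div_le_iff₀ hc]
    simp only [Finset.sum_const, nsmul_eq_mul, mul_one, hcard]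
    linarith
  linarith

theorem stmt_13 {I : Type*} (G : I → Type*) [∀ i, Group (G i)]
    [∀ i, DecidableEq (G i)] (S : ∀ i, Finset (G i))
    (hgen : ∀ i, Subgroup.closure ((S i : Set (G i))) = ⊤)
    (hamen : ∀ i, ∀ T : Finset (G i), T.Nonempty → ∀ δ : ℝ, 0 < δ →
      ∃ F : Finset (G i), F.Nonempty ∧
        ∀ g ∈ T, ((F \ F.image (· * g)).card : ℝ) ≤ δ * F.card) :
    (∀ ε : ℝ, 0 < ε → ∃ D : ℕ, ∃ f : ∀ i, G i → ℝ, ∀ i,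
      (∀ γ, 0 ≤ f i γ) ∧ (∑' γ, f i γ ^ 2 = 1) ∧
      (∀ s ∈ S i, ∑' γ, (f i γ - f i (γ * s)) ^ 2 ≤ ε ^ 2) ∧
      Function.support (f i) ⊆ wordBall ((S i : Set (G i))) D)
    ↔
    (∀ ε : ℝ, 0 < ε → ∀ R : ℕ, ∃ D : ℕ, ∃ ξ : ∀ i, G i → G i → ℝ, ∀ i,
      (∀ x γ, 0 ≤ ξ i x γ) ∧ (∀ x, ∑' γ, ξ i x γ ^ 2 = 1) ∧
      (∀ x y : G i, x⁻¹ * y ∈ wordBall ((S i : Set (G i))) R →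
        ∑' γ, (ξ i x γ - ξ i y γ) ^ 2 ≤ ε ^ 2) ∧
      (∀ x : G i, Function.support (ξ i x) ⊆ (x * ·) '' wordBall ((S i : Set (G i))) D)) := by
  constructor
  · intro H ε hε R
    obtain ⟨D, f, hf⟩ := H (ε / 2 ^ R) (by positivity)
    refine ⟨D, fun i x γ => f i (γ⁻¹ * x), fun i => ?_⟩
    obtain ⟨f0, f1, f2, f3⟩ := hf i
    refine ⟨fun x γ => f0 _, fun x => ?_, fun x y hxy => ?_, fun x γ hγ => ?_⟩
    · rw [← f1]
      exact ((Equiv.inv (G i)).trans (Equiv.mulRight x)).tsum_eq (fun γ => f i γ ^ 2)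
    · obtain ⟨l, l1, l2, l3⟩ := hxy
      have h := aux_list _ (f i) _ (aux_summable f1) f2 l l2
      have e : ∑' γ, (f i (γ⁻¹ * x) - f i (γ⁻¹ * y)) ^ 2
          = ∑' γ, (f i γ - f i (γ * l.prod)) ^ 2 := by
        rw [← ((Equiv.inv (G i)).trans (Equiv.mulRight x)).tsum_eq
          (fun γ => (f i γ - f i (γ * l.prod)) ^ 2), l3]
        refine tsum_congr fun γ => ?_
        simp [mul_assoc]
      refine e.trans_le (h.trans ?_)
      have h4 : (4 : ℝ) ^ l.length ≤ 4 ^ R := pow_le_pow_right₀ (by norm_num) l1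
      have e4 : (4 : ℝ) ^ R = (2 ^ R) ^ 2 := by
        rw [← pow_mul, mul_comm, pow_mul]
        norm_num
      calc (4 : ℝ) ^ l.length * (ε / 2 ^ R) ^ 2 ≤ 4 ^ R * (ε / 2 ^ R) ^ 2 := by gcongr
        _ = ε ^ 2 := by
          rw [e4]
          field_simp
    · have h := aux_inv (f3 hγ)
      exact ⟨_, h, by simp⟩
  · intro H ε hε
    obtain ⟨D, ξ, hξ⟩ := H (ε / 2) (by positivity) 1
    choose F hF hFT using fun i => hamen i (insert 1 ((S i).image (·⁻¹)))
      (Finset.insert_nonempty _ _) (ε ^ 2 / 8) (by positivity)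
    refine ⟨D, fun i h => √((∑ x ∈ F i, ξ i x (x * h⁻¹) ^ 2) / (F i).card), fun i => ?_⟩
    obtain ⟨x0, x1, x2, x3⟩ := hξ i
    refine ⟨fun γ => Real.sqrt_nonneg _, aux_back_one _ (hF i) x1, fun s hs => ?_,
      fun h hh => ?_⟩
    · refine aux_back _ (hF i) x1 s ε (fun x => x2 _ _ ?_) (hFT i _ ?_)
      · refine ⟨[s⁻¹], by simp, ?_, by simp⟩
        intro y hy
        rw [List.mem_singleton] at hy
        subst hy
        right
        simpa using hs
      · exact Finset.mem_insert_of_mem (Finset.mem_image_of_mem _ hs)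
    · by_contra hc
      apply hh
      have : ∑ x ∈ F i, ξ i x (x * h⁻¹) ^ 2 = 0 := by
        refine Finset.sum_eq_zero fun x _ => ?_
        by_contra hne
        have hne' : ξ i x (x * h⁻¹) ≠ 0 := fun h0 => hne (by rw [h0]; norm_num)
        obtain ⟨b, hb, hb'⟩ := x3 x hne'
        have : b = h⁻¹ := mul_left_cancel hb'
        subst this
        exact hc (by simpa using aux_inv hb)
      simp [this]
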